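/- Let (u_ε) be a moderate net of smooth functions on ℝ^n. The following are equivalent: (i) u is invariant under generalized translations in the first coordinate: the net (x,η) ↦ u_ε(x + η e₁) − u_ε(x) is negligible on ℝ^n × ℝ; (ii) the net (∂u_ε/∂x₁) is negligible on ℝ^n; (iii) there exists a net (u'_ε) of smooth functions on ℝ^n with ∂u'_ε/∂x₁ ≡ 0 for all ε and (u_ε − u'_ε) negligible. -/

import Mathlib

/-!
Write `e = e₁` and `v_ε (x, η) = u_ε (x + η e) - u_ε x`. All implications come from two estimates.

* A negligible net has negligible directional derivatives (`negligible_dirDeriv`). Moderateness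
  bounds the second derivative along the segment `x + [0,1] e` by `C ε^{-p}`, and the mean value
  theorem applied twice with step `η = ε^{m+p}` turns a bound `O(ε^{2m+p})` on the values into a
  bound `O(ε^m)` on the derivative.
* If `∂_e u` is negligible then so is `v` (`negligible_translation_sub`), by the mean value theorem
  along the segment from `x` to `x + η e`.

Hence (ii) gives (i), and (i) gives (ii) because `∂_e u_ε x` is the `η`-derivative of `v_ε` at
`(x, 0)`. For (iii), take `u'_ε = u_ε ∘ P` with `P x = x - x₁ e`: then `u_ε x - u'_ε x` equals
`v_ε (P x, x₁)`, the pullback of a negligible net by a linear map. Conversely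
`∂_e u = ∂_e (u - u')`, so (iii) gives (ii) by the first estimate.
-/


open Topology Filter Set

/-- A net of smooth real-valued functions on a normed space is moderate: on each compact
set, every iterated derivative grows at most like some negative power of `ε`. -/
def ModerateF {E : Type*} [NormedAddCommGroup E] [NormedSpace ℝ E]
    (u : ℝ → E → ℝ) : Prop :=
  ∀ K : Set E, IsCompact K → ∀ k : ℕ, ∃ p : ℕ, ∃ C > (0:ℝ), ∃ ε₀ > (0:ℝ),
    ∀ ε : ℝ, 0 < ε → ε < ε₀ → ∀ x ∈ K, ‖iteratedFDeriv ℝ k (u ε) x‖ ≤ C / ε ^ p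

/-- A net of smooth real-valued functions is negligible: it is moderate and its values
are `O(ε^m)` for every `m` uniformly on compact sets. -/
def NegligibleF {E : Type*} [NormedAddCommGroup E] [NormedSpace ℝ E]
    (u : ℝ → E → ℝ) : Prop :=
  ModerateF u ∧ ∀ K : Set E, IsCompact K → ∀ m : ℕ, ∃ C > (0:ℝ), ∃ ε₀ > (0:ℝ),
    ∀ ε : ℝ, 0 < ε → ε < ε₀ → ∀ x ∈ K, |u ε x| ≤ C * ε ^ m

section Nets

variable {E F : Type*} [NormedAddCommGroup E] [NormedSpace ℝ E]
  [NormedAddCommGroup F] [NormedSpace ℝ F]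

lemma eventually_small_iff {P : ℝ → Prop} :
    (∃ ε₀ > (0:ℝ), ∀ ε : ℝ, 0 < ε → ε < ε₀ → P ε) ↔ ∀ᶠ ε in 𝓝[>] (0:ℝ), P ε := by
  rw [(nhdsGT_basis (0:ℝ)).eventually_iff]
  simp only [mem_Ioo, and_imp]

lemma eventually_mem_Ioc : ∀ᶠ ε in 𝓝[>] (0:ℝ), ε ∈ Ioc (0:ℝ) 1 :=
  eventually_small_iff.1 ⟨1, one_pos, fun _ h h' => ⟨h, h'.le⟩⟩

lemma moderateF_iff {u : ℝ → E → ℝ} : ModerateF u ↔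
    ∀ K : Set E, IsCompact K → ∀ k : ℕ, ∃ p : ℕ, ∃ C > (0:ℝ), ∀ᶠ ε in 𝓝[>] (0:ℝ),
      ∀ x ∈ K, ‖iteratedFDeriv ℝ k (u ε) x‖ ≤ C / ε ^ p := by
  simp only [ModerateF, eventually_small_iff]

lemma negligibleF_iff {u : ℝ → E → ℝ} : NegligibleF u ↔
    ModerateF u ∧ ∀ K : Set E, IsCompact K → ∀ m : ℕ, ∃ C > (0:ℝ), ∀ᶠ ε in 𝓝[>] (0:ℝ),
      ∀ x ∈ K, |u ε x| ≤ C * ε ^ m := by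
  simp only [NegligibleF, eventually_small_iff]

lemma ModerateF.congr {u v : ℝ → E → ℝ} (hu : ModerateF u)
    (h : ∀ ε ∈ Ioc (0:ℝ) 1, u ε = v ε) : ModerateF v := by
  rw [moderateF_iff] at hu ⊢
  intro K hK k
  obtain ⟨p, C, hC, H⟩ := hu K hK k
  refine ⟨p, C, hC, ?_⟩
  filter_upwards [H, eventually_mem_Ioc] with ε hε h1
  rwa [← h ε h1]

lemma NegligibleF.congr {u v : ℝ → E → ℝ} (hu : NegligibleF u)
    (h : ∀ ε ∈ Ioc (0:ℝ) 1, u ε = v ε) : NegligibleF v := by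
  rw [negligibleF_iff] at hu ⊢
  refine ⟨hu.1.congr h, fun K hK m => ?_⟩
  obtain ⟨C, hC, H⟩ := hu.2 K hK m
  refine ⟨C, hC, ?_⟩
  filter_upwards [H, eventually_mem_Ioc] with ε hε h1
  rwa [← h ε h1]

lemma ModerateF.comp_clm {u : ℝ → E → ℝ} (hu : ModerateF u)
    (hs : ∀ ε ∈ Ioc (0:ℝ) 1, ContDiff ℝ (⊤ : ℕ∞) (u ε)) (L : F →L[ℝ] E) :
    ModerateF (fun ε x => u ε (L x)) := by
  rw [moderateF_iff] at hu ⊢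
  intro K hK k
  obtain ⟨p, C, hC, H⟩ := hu (L '' K) (hK.image L.continuous) k
  refine ⟨p, C * (‖L‖ ^ k + 1), by positivity, ?_⟩
  filter_upwards [H, eventually_mem_Ioc] with ε hε h1 x hx
  have h2 := L.iteratedFDeriv_comp_right (hs ε h1) x (i := k) (by exact_mod_cast le_top)
  have h3 : (u ε ∘ L) = fun x => u ε (L x) := rfl
  rw [← h3, h2]
  have hb := hε (L x) (mem_image_of_mem _ hx)
  have h0 : 0 ≤ C / ε ^ p := div_nonneg hC.le (pow_nonneg h1.1.le _)
  calc _ ≤ ‖iteratedFDeriv ℝ k (u ε) (L x)‖ * ∏ _i : Fin k, ‖L‖ :=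
        ContinuousMultilinearMap.norm_compContinuousLinearMap_le _ _
    _ = ‖iteratedFDeriv ℝ k (u ε) (L x)‖ * ‖L‖ ^ k := by simp
    _ ≤ C / ε ^ p * (‖L‖ ^ k + 1) := by gcongr; linarith
    _ = _ := by ring

lemma NegligibleF.comp_clm {u : ℝ → E → ℝ} (hu : NegligibleF u)
    (hs : ∀ ε ∈ Ioc (0:ℝ) 1, ContDiff ℝ (⊤ : ℕ∞) (u ε)) (L : F →L[ℝ] E) :
    NegligibleF (fun ε x => u ε (L x)) := by
  refine ⟨hu.1.comp_clm hs L, fun K hK m => ?_⟩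
  obtain ⟨C, hC, ε₀, h₀, H⟩ := hu.2 (L '' K) (hK.image L.continuous) m
  exact ⟨C, hC, ε₀, h₀, fun ε h h' x hx => H ε h h' _ (mem_image_of_mem _ hx)⟩

lemma ModerateF.sub {u v : ℝ → E → ℝ} (hu : ModerateF u) (hv : ModerateF v)
    (hus : ∀ ε ∈ Ioc (0:ℝ) 1, ContDiff ℝ (⊤ : ℕ∞) (u ε))
    (hvs : ∀ ε ∈ Ioc (0:ℝ) 1, ContDiff ℝ (⊤ : ℕ∞) (v ε)) :
    ModerateF (fun ε x => u ε x - v ε x) := by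
  rw [moderateF_iff] at hu hv ⊢
  intro K hK k
  obtain ⟨p, C, hC, H⟩ := hu K hK k
  obtain ⟨q, D, hD, H'⟩ := hv K hK k
  refine ⟨p + q, C + D, by positivity, ?_⟩
  filter_upwards [H, H', eventually_mem_Ioc] with ε h h' h1 x hx
  have e1 : (fun x => u ε x - v ε x) = u ε - v ε := rfl
  have hk : ((k : ℕ∞) : WithTop ℕ∞) ≤ ((⊤ : ℕ∞) : WithTop ℕ∞) := by exact_mod_cast le_top
  rw [e1, iteratedFDeriv_sub_apply (((hus ε h1).of_le hk).contDiffAt)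
    (((hvs ε h1).of_le hk).contDiffAt)]
  have hp : C / ε ^ p ≤ C / ε ^ (p + q) :=
    div_le_div_of_nonneg_left hC.le (pow_pos h1.1 _)
      (pow_le_pow_of_le_one h1.1.le h1.2 (by omega))
  have hq : D / ε ^ q ≤ D / ε ^ (p + q) :=
    div_le_div_of_nonneg_left hD.le (pow_pos h1.1 _)
      (pow_le_pow_of_le_one h1.1.le h1.2 (by omega))
  calc _ ≤ _ := norm_sub_le _ _
    _ ≤ C / ε ^ (p + q) + D / ε ^ (p + q) := by linarith [h x hx, h' x hx]
    _ = _ := by ring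

lemma ContDiff.dirDeriv {f : E → ℝ} (hf : ContDiff ℝ (⊤ : ℕ∞) f) (e : E) :
    ContDiff ℝ (⊤ : ℕ∞) (fun x => fderiv ℝ f x e) :=
  (hf.fderiv_right (m := (⊤ : ℕ∞)) (by simp)).clm_apply contDiff_const

lemma ModerateF.dirDeriv {u : ℝ → E → ℝ} (hu : ModerateF u)
    (hs : ∀ ε ∈ Ioc (0:ℝ) 1, ContDiff ℝ (⊤ : ℕ∞) (u ε)) (e : E) :
    ModerateF (fun ε x => fderiv ℝ (u ε) x e) := by
  rw [moderateF_iff] at hu ⊢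
  intro K hK k
  obtain ⟨p, C, hC, H⟩ := hu K hK (k + 1)
  refine ⟨p, C * (‖e‖ + 1), by positivity, ?_⟩
  filter_upwards [H, eventually_mem_Ioc] with ε hε h1 x hx
  have h0 : 0 ≤ C / ε ^ p := div_nonneg hC.le (pow_nonneg h1.1.le _)
  have hk : ((k : ℕ∞) : WithTop ℕ∞) ≤ ((⊤ : ℕ∞) : WithTop ℕ∞) := by exact_mod_cast le_top
  have h2 := norm_iteratedFDeriv_clm_apply_const (n := k) (c := e)
    (((hs ε h1).fderiv_right (m := (⊤ : ℕ∞)) (by simp)).contDiffAt (x := x)) hk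
  rw [norm_iteratedFDeriv_fderiv] at h2
  calc _ ≤ _ := h2
    _ ≤ (‖e‖ + 1) * (C / ε ^ p) :=
        mul_le_mul (by linarith) (hε x hx) (norm_nonneg _) (by positivity)
    _ = _ := by ring

lemma hasDerivAt_line {f : E → ℝ} (hf : ContDiff ℝ (⊤ : ℕ∞) f) (x e : E) (t : ℝ) :
    HasDerivAt (fun t : ℝ => f (x + t • e)) (fderiv ℝ f (x + t • e) e) t := by
  have h1 : HasFDerivAt f (fderiv ℝ f (x + t • e)) (x + t • e) :=
    (hf.differentiable (by simp) _).hasFDerivAt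
  have h2 : HasDerivAt (fun t : ℝ => x + t • e) e t := by
    simpa using ((hasDerivAt_id t).smul_const e).const_add x
  exact h1.comp_hasDerivAt t h2

/-- A Landau-type interpolation inequality: the derivative at `0` is controlled by the values on
`[0, η]` and the second derivative. -/
lemma abs_deriv_zero_le {f f' f'' : ℝ → ℝ} (h1 : ∀ t, HasDerivAt f (f' t) t)
    (h2 : ∀ t, HasDerivAt f' (f'' t) t) {A M η : ℝ} (hη : 0 < η) (hη1 : η ≤ 1)
    (hA : ∀ t ∈ Icc (0:ℝ) 1, |f t| ≤ A) (hM : ∀ t ∈ Icc (0:ℝ) 1, |f'' t| ≤ M) :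
    |f' 0| ≤ 2 * A / η + M * η := by
  obtain ⟨c, hc, hc'⟩ := exists_hasDerivAt_eq_slope f f' hη
    (fun t _ => (h1 t).continuousAt.continuousWithinAt) (fun t _ => h1 t)
  obtain ⟨d, hd, hd'⟩ := exists_hasDerivAt_eq_slope f' f'' hc.1
    (fun t _ => (h2 t).continuousAt.continuousWithinAt) (fun t _ => h2 t)
  have e1 : f' 0 = (f η - f 0) / η - f'' d * c := by
    have : f'' d * c = f' c - f' 0 := by
      rw [hd', sub_zero, div_mul_cancel₀ _ hc.1.ne']
    rw [this, hc', sub_zero]; ring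
  have hMd := hM d ⟨hd.1.le, by linarith [hd.2, hc.2]⟩
  have a1 : |(f η - f 0) / η| ≤ 2 * A / η := by
    rw [abs_div, abs_of_pos hη]
    gcongr
    calc _ ≤ |f η| + |f 0| := abs_sub _ _
      _ ≤ 2 * A := by linarith [hA η ⟨hη.le, hη1⟩, hA 0 ⟨le_rfl, zero_le_one⟩]
  have a2 : |f'' d * c| ≤ M * η := by
    rw [abs_mul, abs_of_pos hc.1]
    exact mul_le_mul hMd hc.2.le hc.1.le ((abs_nonneg _).trans hMd)
  rw [e1]
  exact (abs_sub _ _).trans (add_le_add a1 a2)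

lemma negligible_dirDeriv {u : ℝ → E → ℝ} (hu : NegligibleF u)
    (hs : ∀ ε ∈ Ioc (0:ℝ) 1, ContDiff ℝ (⊤ : ℕ∞) (u ε)) (e : E) :
    NegligibleF (fun ε x => fderiv ℝ (u ε) x e) := by
  have hs' := fun ε hε => (hs ε hε).dirDeriv e
  have hmod1 := hu.1.dirDeriv hs e
  have hmod2 := moderateF_iff.1 (hmod1.dirDeriv hs' e)
  refine negligibleF_iff.2 ⟨hmod1, fun K hK m => ?_⟩
  set K' : Set E := (fun q : E × ℝ => q.1 + q.2 • e) '' (K ×ˢ Icc (0:ℝ) 1) with hK'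
  have hK'c : IsCompact K' := (hK.prod isCompact_Icc).image (by fun_prop)
  have hmem : ∀ x ∈ K, ∀ t ∈ Icc (0:ℝ) 1, x + t • e ∈ K' := fun x hx t ht =>
    ⟨(x, t), ⟨hx, ht⟩, rfl⟩
  obtain ⟨p, C, hC, H⟩ := hmod2 K' hK'c 0
  obtain ⟨D, hD, H'⟩ := (negligibleF_iff.1 hu).2 K' hK'c (2 * m + p)
  refine ⟨2 * D + C, by positivity, ?_⟩
  filter_upwards [H, H', eventually_mem_Ioc] with ε h h' h1 x hx
  have hε := h1.1
  -- The step `ε^(m+p)` balances the two terms of the interpolation inequality.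
  have key := abs_deriv_zero_le (η := ε ^ (m + p)) (hasDerivAt_line (hs ε h1) x e)
    (hasDerivAt_line (hs' ε h1) x e) (pow_pos hε _) (pow_le_one₀ hε.le h1.2)
    (fun t ht => h' _ (hmem x hx t ht))
    (fun t ht => by simpa using h _ (hmem x hx t ht))
  simp only [zero_smul, add_zero] at key
  refine key.trans (le_of_eq ?_)
  have : ε ^ p ≠ 0 := (pow_pos hε p).ne'
  have : ε ^ m ≠ 0 := (pow_pos hε m).ne'
  rw [show 2 * m + p = m + (m + p) by ring, pow_add ε m (m + p), pow_add ε m p]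
  field_simp

lemma contDiff_translation_sub {f : E → ℝ} (hf : ContDiff ℝ (⊤ : ℕ∞) f) (e : E) :
    ContDiff ℝ (⊤ : ℕ∞) (fun p : E × ℝ => f (p.1 + p.2 • e) - f p.1) :=
  (hf.comp (contDiff_fst.add (contDiff_snd.smul contDiff_const))).sub (hf.comp contDiff_fst)

lemma negligible_translation_sub {u : ℝ → E → ℝ} (hu : ModerateF u)
    (hs : ∀ ε ∈ Ioc (0:ℝ) 1, ContDiff ℝ (⊤ : ℕ∞) (u ε)) (e : E)
    (hd : NegligibleF (fun ε x => fderiv ℝ (u ε) x e)) :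
    NegligibleF (fun ε (p : E × ℝ) => u ε (p.1 + p.2 • e) - u ε p.1) := by
  let L : E × ℝ →L[ℝ] E :=
    ContinuousLinearMap.fst ℝ E ℝ + (ContinuousLinearMap.snd ℝ E ℝ).smulRight e
  have hmod : ModerateF (fun ε (p : E × ℝ) => u ε (p.1 + p.2 • e) - u ε p.1) :=
    (hu.comp_clm hs L).sub (hu.comp_clm hs (ContinuousLinearMap.fst ℝ E ℝ))
      (fun ε hε => (hs ε hε).comp L.contDiff)
      (fun ε hε => (hs ε hε).comp contDiff_fst)
  refine negligibleF_iff.2 ⟨hmod, fun K hK m => ?_⟩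
  set K' : Set E := (fun q : (E × ℝ) × ℝ => q.1.1 + (q.2 * q.1.2) • e) '' (K ×ˢ Icc (0:ℝ) 1)
    with hK'
  have hK'c : IsCompact K' := (hK.prod isCompact_Icc).image (by fun_prop)
  obtain ⟨R, hR⟩ := (hK.image continuous_snd).isBounded.exists_norm_le
  obtain ⟨C, hC, H⟩ := (negligibleF_iff.1 hd).2 K' hK'c m
  refine ⟨C * (|R| + 1), by positivity, ?_⟩
  filter_upwards [H, eventually_mem_Ioc] with ε h h1 p hp
  have hder := hasDerivAt_line (hs ε h1) p.1 (p.2 • e)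
  obtain ⟨c, hc, hc'⟩ := exists_hasDerivAt_eq_slope _ _ (zero_lt_one (α := ℝ))
    (fun t _ => (hder t).continuousAt.continuousWithinAt) (fun t _ => hder t)
  simp only [one_smul, zero_smul, add_zero, sub_zero, div_one, map_smul, smul_eq_mul] at hc'
  rw [← hc', abs_mul]
  have hb := h (p.1 + c • p.2 • e) ⟨(p, c), ⟨hp, hc.1.le, hc.2.le⟩, by simp [smul_smul]⟩
  have hp2 : |p.2| ≤ |R| + 1 := by
    have := hR p.2 (mem_image_of_mem _ hp)
    rw [Real.norm_eq_abs] at this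
    linarith [le_abs_self R]
  calc _ ≤ (|R| + 1) * (C * ε ^ m) := mul_le_mul hp2 hb (abs_nonneg _) (by positivity)
    _ = _ := by ring

/-- The directional derivative of `f` is the parameter derivative at `η = 0` of its translation
difference. -/
lemma fderiv_translation_sub {f : E → ℝ} (hf : ContDiff ℝ (⊤ : ℕ∞) f) (x e : E) :
    fderiv ℝ (fun p : E × ℝ => f (p.1 + p.2 • e) - f p.1) (x, 0) (0, 1) = fderiv ℝ f x e := by
  have h1 := hasDerivAt_line (contDiff_translation_sub hf e) (x, (0:ℝ)) ((0:E), (1:ℝ)) 0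
  have h2 := (hasDerivAt_line hf x e 0).sub_const (f x)
  simp only [zero_smul, add_zero, Prod.smul_mk, smul_zero, Prod.mk_add_mk, zero_add, smul_eq_mul,
    mul_one] at h1 h2
  exact h1.unique h2

end Nets

/-- for a moderate net `(u_ε)` of smooth functions on `ℝ^n` the following
are equivalent: (i) invariance under generalized translations in the first coordinate;
(ii) `∂u_ε/∂x₁` is negligible; (iii) `u` has a representative not depending on `x₁`. -/
theorem stmt10 {n : ℕ} [NeZero n]
    (u : ℝ → (Fin n → ℝ) → ℝ)
    (hus : ∀ ε ∈ Set.Ioc (0:ℝ) 1, ContDiff ℝ (⊤ : ℕ∞) (u ε))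
    (humod : ModerateF u) :
    (NegligibleF (fun ε (p : (Fin n → ℝ) × ℝ) =>
        u ε (p.1 + p.2 • (Pi.single (0 : Fin n) (1:ℝ) : Fin n → ℝ)) - u ε p.1) ↔
      NegligibleF (fun ε x => fderiv ℝ (u ε) x (Pi.single (0 : Fin n) (1:ℝ)))) ∧
    (NegligibleF (fun ε x => fderiv ℝ (u ε) x (Pi.single (0 : Fin n) (1:ℝ))) ↔
      ∃ u' : ℝ → (Fin n → ℝ) → ℝ,
        (∀ ε : ℝ, ContDiff ℝ (⊤ : ℕ∞) (u' ε)) ∧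
        (∀ (ε : ℝ) (x : Fin n → ℝ),
          fderiv ℝ (u' ε) x (Pi.single (0 : Fin n) (1:ℝ)) = 0) ∧
        NegligibleF (fun ε x => u ε x - u' ε x)) := by
  set e : Fin n → ℝ := Pi.single 0 1 with he
  have h12 : NegligibleF (fun ε (p : (Fin n → ℝ) × ℝ) => u ε (p.1 + p.2 • e) - u ε p.1) →
      NegligibleF (fun ε x => fderiv ℝ (u ε) x e) := fun h => by
    have hs := fun ε hε => contDiff_translation_sub (hus ε hε) e
    refine NegligibleF.congr ((negligible_dirDeriv h hs ((0 : Fin n → ℝ), (1:ℝ))).comp_clm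
      (fun ε hε => (hs ε hε).dirDeriv _) (ContinuousLinearMap.inl ℝ (Fin n → ℝ) ℝ)) ?_
    intro ε hε
    funext x
    exact fderiv_translation_sub (hus ε hε) x e
  have h21 := negligible_translation_sub humod hus e
  refine ⟨⟨h12, h21⟩, fun h => ?_, ?_⟩
  · let π : (Fin n → ℝ) →L[ℝ] ℝ := ContinuousLinearMap.proj 0
    let P : (Fin n → ℝ) →L[ℝ] (Fin n → ℝ) :=
      ContinuousLinearMap.id ℝ _ - π.smulRight e
    have hPe : P e = 0 := by simp [P, π, he]
    classical
    -- Smoothness of `u ε` is only known for `ε ∈ (0, 1]`, so `u'` is set to zero elsewhere.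
    refine ⟨fun ε => if ε ∈ Ioc (0:ℝ) 1 then u ε ∘ P else 0, fun ε => ?_, fun ε x => ?_, ?_⟩
    · dsimp only
      split_ifs with hε
      · exact (hus ε hε).comp P.contDiff
      · exact contDiff_const
    · dsimp only
      split_ifs with hε
      · rw [fderiv_comp x ((hus ε hε).differentiable (by simp) _) P.differentiableAt]
        simp [hPe]
      · simp
    · refine NegligibleF.congr ((h21 h).comp_clm
        (fun ε hε => contDiff_translation_sub (hus ε hε) e) (P.prod π)) ?_
      intro ε hε
      funext x
      simp [hε, P]
  · rintro ⟨u', hu's, hu'0, hneg⟩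
    refine NegligibleF.congr (negligible_dirDeriv hneg
      (fun ε hε => (hus ε hε).sub (hu's ε)) e) ?_
    intro ε hε
    funext x
    rw [fderiv_fun_sub ((hus ε hε).differentiable (by simp) _)
      ((hu's ε).differentiable (by simp) _)]
    simp [hu'0]
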